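/- A shellable pure d-dimensional simplicial complex that is not a simplex has geometric realization homotopy equivalent to a wedge of r copies of the d-sphere, where r equals the absolute value of its reduced Euler characteristic. -/

import Mathlib

open scoped Classical

/-- Geometric realization of an abstract simplicial complex with (finite) vertex
set `V`: the set of convex weight functions whose support is a face. -/
def realization {V : Type} [Fintype V] (K : Set (Finset V)) : Set (V → ℝ) :=
  {f | (∀ v, 0 ≤ f v) ∧ (∑ v, f v) = 1 ∧ (Finset.univ.filter fun v => f v ≠ 0) ∈ K}

/-- The base point of the `d`-sphere. -/
noncomputable def spherePt (d : ℕ) :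
    Metric.sphere (0 : EuclideanSpace ℝ (Fin (d + 1))) 1 :=
  ⟨EuclideanSpace.single 0 1, by simp⟩

def IsWedgeBase (r d : ℕ)
    (x : Unit ⊕ (Fin r × Metric.sphere (0 : EuclideanSpace ℝ (Fin (d + 1))) 1)) : Prop :=
  x = Sum.inl () ∨ ∃ i, x = Sum.inr (i, spherePt d)

noncomputable def wedgeSetoid (r d : ℕ) :
    Setoid (Unit ⊕ (Fin r × Metric.sphere (0 : EuclideanSpace ℝ (Fin (d + 1))) 1)) where
  r x y := x = y ∨ (IsWedgeBase r d x ∧ IsWedgeBase r d y)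
  iseqv := by
    constructor
    · intro x; exact Or.inl rfl
    · rintro x y (rfl | ⟨hx, hy⟩); exacts [Or.inl rfl, Or.inr ⟨hy, hx⟩]
    · rintro x y z (rfl | ⟨hx, hy⟩) (rfl | ⟨hy', hz⟩)
      · exact Or.inl rfl
      · exact Or.inr ⟨hy', hz⟩
      · exact Or.inr ⟨hx, hy⟩
      · exact Or.inr ⟨hx, hz⟩

/-- The wedge of `r` copies of the `d`-sphere (a single point when `r = 0`). -/
noncomputable def WedgeOfSpheres (r d : ℕ) : Type := Quotient (wedgeSetoid r d)

noncomputable instance (r d : ℕ) : TopologicalSpace (WedgeOfSpheres r d) :=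
  instTopologicalSpaceQuotient

/-- The Björner–Wachs shelling criterion for an ordering of facets. -/
def IsShellingOrder {V : Type} [DecidableEq V] {t : ℕ} (F : Fin t → Finset V) : Prop :=
  ∀ i k : Fin t, i < k → ∃ j, j < k ∧
    F i ∩ F k ⊆ F j ∩ F k ∧ (F j ∩ F k).card = (F k).card - 1

/-- A facet of `K`: a maximal face. -/
def IsFacet {V : Type} (K : Set (Finset V)) (σ : Finset V) : Prop :=
  σ ∈ K ∧ ∀ τ ∈ K, σ ⊆ τ → σ = τ

/-!
Each facet `F k` of a shelling attaches exactly the interval `[R(F k), F k]` of new faces to the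
previous ones. Unless `R(F k) = F k`, the previous faces of `F k` form a part of its boundary onto
which it retracts by moving weight off `R(F k)`. Hence the complex without the facets satisfying
`R(F k) = F k`, the homology facets, is contractible, even by a deformation of the whole complex;
collapsing it to a point leaves the one-point compactification of a disjoint union of open cells,
which is a wedge of spheres. The intervals partition the faces, and an interval contributes to the
Euler characteristic only if it is a single face, so the homology facets are counted by the reduced
Euler characteristic.

In place of the homotopy extension property, a retraction of a facet is extended to the whole
complex along a map which squeezes a neighbourhood of the facet onto it.
-/

open Topology

section Collapse

variable {X Y : Type*} {g : Y → X} {x x' : X}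

/-- The Pontryagin–Thom collapse onto the one-point compactification: it inverts `g` on the range
of `g` and sends everything else to infinity. It is meant for injective `g`; the inverse is chosen
arbitrarily otherwise. -/
noncomputable def collapse (g : Y → X) : X → OnePoint Y :=
  Function.extend g (↑) fun _ => OnePoint.infty

theorem collapse_apply (hg : Function.Injective g) (y : Y) : collapse g (g y) = y :=
  hg.extend_apply _ _ y

theorem collapse_of_notMem (hx : x ∉ Set.range g) : collapse g x = OnePoint.infty :=
  Function.extend_apply' _ _ x hx

theorem collapse_eq_collapse_iff (hg : Function.Injective g) :
    collapse g x = collapse g x' ↔ x = x' ∨ x ∉ Set.range g ∧ x' ∉ Set.range g := by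
  by_cases hx : x ∈ Set.range g <;> by_cases hx' : x' ∈ Set.range g
  · obtain ⟨y, rfl⟩ := hx
    obtain ⟨y', rfl⟩ := hx'
    simp [collapse_apply hg, hg.eq_iff]
  · obtain ⟨y, rfl⟩ := hx
    have hne : g y ≠ x' := fun h => hx' ⟨y, h⟩
    simp [collapse_apply hg, collapse_of_notMem hx', hne]
  · obtain ⟨y', rfl⟩ := hx'
    have hne : x ≠ g y' := fun h => hx ⟨y', h.symm⟩
    simp [collapse_apply hg, collapse_of_notMem hx, hne]
  · simp only [collapse_of_notMem hx, collapse_of_notMem hx', hx, hx', not_false_eq_true,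
      and_self, or_true]

theorem collapse_surjective (hg : Function.Injective g) (hx : x ∉ Set.range g) :
    Function.Surjective (collapse g) := by
  rintro (_ | y)
  · exact ⟨x, collapse_of_notMem hx⟩
  · exact ⟨g y, collapse_apply hg y⟩

theorem collapse_preimage_of_infty_notMem (hg : Function.Injective g) {s : Set (OnePoint Y)}
    (hs : OnePoint.infty ∉ s) : collapse g ⁻¹' s = g '' ((↑) ⁻¹' s) := by
  ext x
  by_cases hx : x ∈ Set.range g
  · obtain ⟨y, rfl⟩ := hx
    rw [Set.mem_preimage, collapse_apply hg, hg.mem_set_image, Set.mem_preimage]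
  · rw [Set.mem_preimage, collapse_of_notMem hx]
    exact iff_of_false hs fun h => hx (Set.image_subset_range _ _ h)

variable [TopologicalSpace X] [TopologicalSpace Y] [T2Space X]

theorem continuous_collapse (hg : IsOpenEmbedding g) : Continuous (collapse g) := by
  refine continuous_def.2 fun s hs => ?_
  obtain ⟨hcompact, hopen⟩ := OnePoint.isOpen_def.1 hs
  by_cases hinfty : OnePoint.infty ∈ s
  · rw [← isClosed_compl_iff, ← Set.preimage_compl,
      collapse_preimage_of_infty_notMem hg.injective (Set.notMem_compl_iff.2 hinfty)]
    exact ((hcompact hinfty).image hg.continuous).isClosed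
  · rw [collapse_preimage_of_infty_notMem hg.injective hinfty]
    exact hg.isOpenMap _ hopen

theorem isQuotientMap_collapse [CompactSpace X] (hg : IsOpenEmbedding g)
    (hx : x ∉ Set.range g) : IsQuotientMap (collapse g) := by
  have : T2Space Y := hg.isEmbedding.t2Space
  have : LocallyCompactSpace Y := hg.locallyCompactSpace
  exact (continuous_collapse hg).isClosedMap.isQuotientMap (continuous_collapse hg)
    (collapse_surjective hg.injective hx)

end Collapse

section Deformation

variable {X : Type*} [TopologicalSpace X] {A B C : Set X} {f g : C(X, X)}

/-- `f` is the end of a deformation of the space `X` which maps the subset `A` into itself at all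
times. -/
def IsDeformation (A : Set X) (f : C(X, X)) : Prop :=
  ContinuousMap.HomotopicWith (.id X) f fun h => Set.MapsTo h A A

theorem IsDeformation.comp (hg : IsDeformation A g) (hf : IsDeformation A f) :
    IsDeformation A (g.comp f) := by
  obtain ⟨G⟩ := hg
  obtain ⟨H⟩ := hf
  exact ⟨H.trans ⟨G.toHomotopy.compContinuousMap f, fun t =>
    (G.prop t).comp (by simpa using H.prop 1)⟩⟩

/-- A deformation of `X`, mapping the subset `A` into itself at all times, contracts `B` to a
point. -/
def ContractsWithin (A B : Set X) : Prop :=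
  ∃ f p, IsDeformation A f ∧ ∀ x ∈ B, f x = p

theorem ContractsWithin.of_mapsTo (hB : ContractsWithin A B) (hf : IsDeformation A f)
    (hfB : Set.MapsTo f C B) : ContractsWithin A C := by
  obtain ⟨g, p, hg, hgp⟩ := hB
  exact ⟨g.comp f, p, hg.comp hf, fun x hx => hgp _ (hfB hx)⟩

theorem ContractsWithin.mono (hB : ContractsWithin A B) (hC : C ⊆ B) : ContractsWithin A C := by
  obtain ⟨f, p, hf, hfp⟩ := hB
  exact ⟨f, p, hf, fun x hx => hfp x (hC hx)⟩

/-- `W` is the quotient `X / A`. -/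
theorem ContractsWithin.nonempty_homotopyEquiv {W : Type*} [TopologicalSpace W]
    (hA : ContractsWithin A A) {q : C(X, W)} (hq : IsQuotientMap q)
    (hqA : ∀ x y, q x = q y ↔ x = y ∨ x ∈ A ∧ y ∈ A) :
    Nonempty (ContinuousMap.HomotopyEquiv X W) := by
  obtain ⟨f, p, ⟨H⟩, hfp⟩ := hA
  have hf : Function.FactorsThrough f q := fun x y hxy => by
    rcases (hqA x y).1 hxy with rfl | ⟨hx, hy⟩
    exacts [rfl, (hfp x hx).trans (hfp y hy).symm]
  have hH (t : unitInterval) : Function.FactorsThrough (fun x => q (H (t, x))) q :=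
    fun x y hxy => by
      rcases (hqA x y).1 hxy with rfl | ⟨hx, hy⟩
      exacts [rfl, (hqA _ _).2 (.inr ⟨H.prop t hx, H.prop t hy⟩)]
  let g : C(W, X) := hq.lift f hf
  have hg (x : X) : g (q x) = f x := DFunLike.congr_fun (hq.lift_comp f hf) x
  let G (z : unitInterval × W) : W := q (H (z.1, Function.surjInv hq.surjective z.2))
  have hG (t : unitInterval) (x : X) : G (t, q x) = q (H (t, x)) :=
    hH t (Function.surjInv_eq hq.surjective (q x))
  have hGcont : Continuous G := hq.continuous_lift_prod_right <| by
    simp only [hG]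
    exact q.continuous.comp H.continuous
  refine ⟨⟨q, g, .symm ⟨H.toHomotopy.cast rfl (ContinuousMap.ext fun x => (hg x).symm)⟩,
    .symm ⟨⟨⟨G, hGcont⟩, fun w => ?_, fun w => ?_⟩⟩⟩⟩
  · obtain ⟨x, rfl⟩ := hq.surjective w
    exact (hG 0 x).trans (congrArg q (H.apply_zero x))
  · obtain ⟨x, rfl⟩ := hq.surjective w
    exact (hG 1 x).trans (congrArg q ((H.apply_one x).trans (hg x).symm))

end Deformation

section WedgeOfSpheres

theorem exists_isOpenEmbedding_range_eq_compl_spherePt (d : ℕ) :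
    ∃ g : EuclideanSpace ℝ (Fin d) → Metric.sphere (0 : EuclideanSpace ℝ (Fin (d + 1))) 1,
      IsOpenEmbedding g ∧ Set.range g = {spherePt d}ᶜ := by
  have : Fact (Module.finrank ℝ (EuclideanSpace ℝ (Fin (d + 1))) = d + 1) :=
    ⟨finrank_euclideanSpace_fin⟩
  let e := (stereographic' d (spherePt d)).symm
  have he : e.source = Set.univ := stereographic'_target (spherePt d)
  refine ⟨e, e.isOpenEmbedding he, ?_⟩
  rw [← Set.image_univ, ← he, e.image_source_eq_target]
  exact stereographic'_source (spherePt d)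

theorem exists_isOpenEmbedding_notMem_range_iff_isWedgeBase (r d : ℕ) :
    ∃ g : Fin r × EuclideanSpace ℝ (Fin d) →
        Unit ⊕ (Fin r × Metric.sphere (0 : EuclideanSpace ℝ (Fin (d + 1))) 1),
      IsOpenEmbedding g ∧ ∀ x, x ∉ Set.range g ↔ IsWedgeBase r d x := by
  obtain ⟨g, hg, hrange⟩ := exists_isOpenEmbedding_range_eq_compl_spherePt d
  refine ⟨Sum.inr ∘ Prod.map id g, .comp .inr (.prodMap .id hg), ?_⟩
  rintro (x | ⟨i, s⟩)
  · simp [IsWedgeBase]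
  · have hs : s ∉ Set.range g ↔ s = spherePt d := by
      rw [hrange, Set.notMem_compl_iff, Set.mem_singleton_iff]
    simpa [IsWedgeBase] using hs

theorem nonempty_wedgeOfSpheres_homeomorph (r d : ℕ) :
    Nonempty (WedgeOfSpheres r d ≃ₜ OnePoint (Fin r × EuclideanSpace ℝ (Fin d))) := by
  obtain ⟨g, hg, hrange⟩ := exists_isOpenEmbedding_notMem_range_iff_isWedgeBase r d
  have hquot : IsQuotientMap (⟨collapse g, continuous_collapse hg⟩ : C(_, _)) :=
    isQuotientMap_collapse hg ((hrange (.inl ())).2 (.inl rfl))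
  have hker : Setoid.ker (collapse g) = wedgeSetoid r d := Setoid.ext fun x y => by
    rw [Setoid.ker_def, collapse_eq_collapse_iff hg.injective, hrange, hrange]
    rfl
  change Nonempty (Quotient (wedgeSetoid r d) ≃ₜ _)
  rw [← hker]
  exact ⟨hquot.homeomorph⟩

end WedgeOfSpheres

section Realization

variable {V : Type} [Fintype V] {K L : Set (Finset V)} {σ τ : Finset V} {x : V → ℝ}

/-- The vertices of positive weight: the unique face whose open simplex contains a given point of
a realization. -/
noncomputable def weightSupport (x : V → ℝ) : Finset V := Finset.univ.filter fun v => x v ≠ 0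

@[simp]
theorem mem_weightSupport {v : V} : v ∈ weightSupport x ↔ x v ≠ 0 := by
  simp [weightSupport]

theorem mem_realization : x ∈ realization K ↔ x ∈ stdSimplex ℝ V ∧ weightSupport x ∈ K :=
  and_assoc.symm

theorem realization_mono (h : K ⊆ L) : realization K ⊆ realization L :=
  fun _ hx => ⟨hx.1, hx.2.1, h hx.2.2⟩

theorem single_mem_realization [DecidableEq V] {v : V} (hv : {v} ∈ K) :
    (Pi.single v 1 : V → ℝ) ∈ realization K := by
  refine mem_realization.2 ⟨single_mem_stdSimplex ℝ v, ?_⟩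
  convert hv
  ext w
  simp [Pi.single_apply]

/-- The closed simplex spanned by a set of vertices. -/
def closedSimplex (τ : Finset V) : Set (V → ℝ) := realization (Set.Iic τ)

theorem mem_closedSimplex : x ∈ closedSimplex τ ↔ x ∈ stdSimplex ℝ V ∧ ∀ v ∉ τ, x v = 0 := by
  simp only [closedSimplex, mem_realization, Set.mem_Iic, Finset.subset_iff,
    mem_weightSupport, not_imp_comm]

theorem mem_closedSimplex_weightSupport (hx : x ∈ stdSimplex ℝ V) :
    x ∈ closedSimplex (weightSupport x) :=
  mem_realization.2 ⟨hx, Set.self_mem_Iic⟩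

theorem closedSimplex_subset_realization (hK : IsLowerSet K) (hτ : τ ∈ K) :
    closedSimplex τ ⊆ realization K :=
  realization_mono (hK.Iic_subset hτ)

theorem convex_closedSimplex (τ : Finset V) : Convex ℝ (closedSimplex τ) := by
  intro x hx y hy a b ha hb hab
  rw [mem_closedSimplex] at *
  exact ⟨convex_stdSimplex ℝ V hx.1 hy.1 ha hb hab, fun v hv => by
    simp [hx.2 v hv, hy.2 v hv]⟩

theorem isClosed_closedSimplex (τ : Finset V) : IsClosed (closedSimplex τ) := by
  have : closedSimplex τ = stdSimplex ℝ V ∩ ⋂ v ∈ (τ : Set V)ᶜ, {x | x v = 0} := by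
    ext x
    simp [mem_closedSimplex]
  rw [this]
  exact (isClosed_stdSimplex ℝ V).inter <| isClosed_biInter fun v _ =>
    isClosed_eq (continuous_apply v) continuous_const

theorem isCompact_realization (hK : IsLowerSet K) : IsCompact (realization K) := by
  refine (isCompact_stdSimplex ℝ V).of_isClosed_subset ?_ fun x hx => (mem_realization.1 hx).1
  have : realization K = ⋃ σ ∈ K, closedSimplex σ := by
    refine subset_antisymm (fun x hx => ?_) (Set.iUnion₂_subset fun σ =>
      closedSimplex_subset_realization hK)
    exact Set.mem_biUnion hx.2.2 (mem_closedSimplex_weightSupport (mem_realization.1 hx).1)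
  rw [this]
  exact K.toFinite.isClosed_biUnion fun σ _ => isClosed_closedSimplex σ

/-- The geometric realization of a simplicial complex as a space. The complex is encoded as a lower
set of faces, which includes the empty face unless there are no faces at all. -/
abbrev Polyhedron (K : LowerSet (Finset V)) : Type := realization (K : Set (Finset V))

/-- The realization of `L` as a subspace of the realization of `K`; only the common faces of `K`
and `L` contribute. -/
def subpolyhedron (K L : LowerSet (Finset V)) : Set (Polyhedron K) := {x | x.1 ∈ realization L}

theorem mem_subpolyhedron {K L : LowerSet (Finset V)} {x : Polyhedron K} :
    x ∈ subpolyhedron K L ↔ weightSupport x.1 ∈ L :=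
  ⟨fun hx => hx.2.2, fun hx => ⟨x.2.1, x.2.2.1, hx⟩⟩

theorem subpolyhedron_mono (K : LowerSet (Finset V)) {L L' : LowerSet (Finset V)} (h : L ≤ L') :
    subpolyhedron K L ⊆ subpolyhedron K L' :=
  fun _ hx => realization_mono h hx

end Realization

section Cell

variable {V : Type} {d : ℕ} {σ : Finset V} (e : σ ≃ Fin (d + 1))

/-- Homogeneous coordinates of the point of an open simplex with given logarithmic coordinates. -/
noncomputable def expCoord (y : EuclideanSpace ℝ (Fin d)) : Fin (d + 1) → ℝ :=
  Fin.cons 1 fun j => Real.exp (y j)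

theorem expCoord_pos (y : EuclideanSpace ℝ (Fin d)) (j : Fin (d + 1)) : 0 < expCoord y j :=
  Fin.cases zero_lt_one (fun j => Real.exp_pos (y j)) j

theorem sum_expCoord_pos (y : EuclideanSpace ℝ (Fin d)) : 0 < ∑ j, expCoord y j :=
  Finset.sum_pos (fun j _ => expCoord_pos y j) Finset.univ_nonempty

theorem continuous_expCoord : Continuous (expCoord (d := d)) := by
  unfold expCoord
  fun_prop

/-- The point of the open simplex `σ`, with vertices numbered by `e`, with given logarithmic
coordinates. -/
noncomputable def cellPoint (y : EuclideanSpace ℝ (Fin d)) (v : V) : ℝ :=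
  if h : v ∈ σ then expCoord y (e ⟨v, h⟩) / ∑ j, expCoord y j else 0

/-- Logarithmic coordinates on the open simplex `σ`: the logarithms of the weights relative to the
weight of the initial vertex. -/
noncomputable def cellCoord (x : V → ℝ) : EuclideanSpace ℝ (Fin d) :=
  WithLp.toLp 2 fun j => Real.log (x (e.symm j.succ) / x (e.symm 0))

theorem cellPoint_of_notMem (y : EuclideanSpace ℝ (Fin d)) {v : V} (hv : v ∉ σ) :
    cellPoint e y v = 0 :=
  dif_neg hv

theorem cellPoint_symm (y : EuclideanSpace ℝ (Fin d)) (j : Fin (d + 1)) :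
    cellPoint e y (e.symm j) = expCoord y j / ∑ j, expCoord y j := by
  simp [cellPoint]

theorem cellPoint_pos (y : EuclideanSpace ℝ (Fin d)) {v : V} (hv : v ∈ σ) :
    0 < cellPoint e y v := by
  rw [cellPoint, dif_pos hv]
  exact div_pos (expCoord_pos y _) (sum_expCoord_pos y)

theorem cellPoint_nonneg (y : EuclideanSpace ℝ (Fin d)) (v : V) : 0 ≤ cellPoint e y v := by
  by_cases hv : v ∈ σ
  exacts [(cellPoint_pos e y hv).le, (cellPoint_of_notMem e y hv).ge]

theorem continuous_cellPoint : Continuous (cellPoint e) := by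
  refine continuous_pi fun v => ?_
  have hcoord := continuous_expCoord (d := d)
  by_cases hv : v ∈ σ
  · simp only [cellPoint, dif_pos hv]
    exact .div (by fun_prop) (by fun_prop) fun y => (sum_expCoord_pos y).ne'
  · simp only [cellPoint, dif_neg hv]
    exact continuous_const

theorem continuousOn_cellCoord : ContinuousOn (cellCoord e) {x | ∀ v ∈ σ, 0 < x v} := by
  refine (PiLp.continuous_toLp 2 _).comp_continuousOn (continuousOn_pi.2 fun j => ?_)
  have hpos (x : V → ℝ) (hx : ∀ v ∈ σ, 0 < x v) (j : Fin (d + 1)) : x (e.symm j) ≠ 0 :=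
    (hx _ (e.symm j).2).ne'
  exact .log (.div (by fun_prop) (by fun_prop) fun x hx => hpos x hx 0)
    fun x hx => div_ne_zero (hpos x hx _) (hpos x hx 0)

theorem cellCoord_cellPoint (y : EuclideanSpace ℝ (Fin d)) :
    cellCoord e (cellPoint e y) = y := by
  ext j
  simp only [cellCoord, cellPoint_symm, div_div_div_cancel_right₀ (sum_expCoord_pos y).ne']
  simp [expCoord]

theorem expCoord_cellCoord {x : V → ℝ} (hx : ∀ v ∈ σ, 0 < x v) (j : Fin (d + 1)) :
    expCoord (cellCoord e x) j = x (e.symm j) / x (e.symm 0) := by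
  have hpos (j : Fin (d + 1)) : 0 < x (e.symm j) := hx _ (e.symm j).2
  cases j using Fin.cases with
  | zero => exact (div_self (hpos 0).ne').symm
  | succ j => exact Real.exp_log (div_pos (hpos _) (hpos 0))

theorem cellPoint_injective : Function.Injective (cellPoint e) :=
  Function.LeftInverse.injective (cellCoord_cellPoint e)

variable [Fintype V] {K : Set (Finset V)}

theorem sum_eq_sum_symm {x : V → ℝ} (hx : ∀ v ∉ σ, x v = 0) :
    ∑ v, x v = ∑ j, x (e.symm j) := by
  rw [Equiv.sum_comp e.symm fun v : σ => x v, Finset.sum_coe_sort σ x]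
  exact (Finset.sum_subset σ.subset_univ fun v _ hv => hx v hv).symm

theorem weightSupport_cellPoint (y : EuclideanSpace ℝ (Fin d)) :
    weightSupport (cellPoint e y) = σ := by
  ext v
  by_cases hv : v ∈ σ
  · simp [hv, (cellPoint_pos e y hv).ne']
  · simp [hv, cellPoint_of_notMem e y hv]

theorem cellPoint_mem_realization (hσ : σ ∈ K) (y : EuclideanSpace ℝ (Fin d)) :
    cellPoint e y ∈ realization K := by
  refine mem_realization.2 ⟨⟨cellPoint_nonneg e y, ?_⟩, (weightSupport_cellPoint e y).symm ▸ hσ⟩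
  rw [sum_eq_sum_symm e fun v => cellPoint_of_notMem e y]
  simp only [cellPoint_symm]
  rw [← Finset.sum_div, div_self (sum_expCoord_pos y).ne']

theorem cellPoint_cellCoord {x : V → ℝ} (hx : x ∈ stdSimplex ℝ V) (hsupp : weightSupport x = σ) :
    cellPoint e (cellCoord e x) = x := by
  have hzero (v : V) (hv : v ∉ σ) : x v = 0 := by simpa [← hsupp] using hv
  have hpos (v : V) (hv : v ∈ σ) : 0 < x v :=
    (hx.1 v).lt_of_ne' (mem_weightSupport.1 (hsupp.symm ▸ hv))
  ext v
  by_cases hv : v ∈ σ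
  · obtain ⟨j, hj⟩ := e.symm.surjective ⟨v, hv⟩
    obtain rfl : (e.symm j : V) = v := congrArg Subtype.val hj
    rw [cellPoint_symm]
    simp only [expCoord_cellCoord e hpos]
    rw [← Finset.sum_div, ← sum_eq_sum_symm e hzero, hx.2,
      div_div_div_cancel_right₀ (hpos _ (e.symm 0).2).ne', div_one]
  · rw [cellPoint_of_notMem e _ hv, hzero v hv]

/-- A point of the realization all of whose weights at the vertices of a facet are positive lies in
the open simplex of that facet, so a cell in a facet is open in the realization. -/
theorem isOpenMap_cellPoint (hσ : IsFacet K σ) :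
    IsOpenMap fun y => (⟨cellPoint e y, cellPoint_mem_realization e hσ.1 y⟩ : realization K) := by
  intro U hU
  have hT : IsOpen {x : V → ℝ | ∀ v ∈ σ, 0 < x v} := by
    simp only [Set.ofPred_forall]
    exact isOpen_biInter_finset fun v _ => isOpen_lt continuous_const (continuous_apply v)
  have hopen := (continuousOn_cellCoord e).isOpen_inter_preimage hT hU
  convert hopen.preimage (continuous_subtype_val : Continuous (Subtype.val : realization K → _))
    using 1
  ext ⟨x, hx⟩
  constructor
  · rintro ⟨y, hy, hyx⟩
    obtain rfl : cellPoint e y = x := congrArg Subtype.val hyx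
    exact ⟨fun v => cellPoint_pos e y, by rwa [Set.mem_preimage, cellCoord_cellPoint]⟩
  · rintro ⟨hpos, hU⟩
    have hsub : σ ⊆ weightSupport x := fun v hv => mem_weightSupport.2 (hpos v hv).ne'
    exact ⟨cellCoord e x, hU, Subtype.ext <|
      cellPoint_cellCoord e (mem_realization.1 hx).1 (hσ.2 _ hx.2.2 hsub).symm⟩

theorem exists_isOpenEmbedding_cells {ι : Type*} [TopologicalSpace ι] [DiscreteTopology ι]
    {G : ι → Finset V} (hG : Function.Injective G) (hfacet : ∀ i, IsFacet K (G i))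
    (hcard : ∀ i, (G i).card = d + 1) :
    ∃ g : ι × EuclideanSpace ℝ (Fin d) → realization K, IsOpenEmbedding g ∧
      ∀ x, x ∈ Set.range g ↔ weightSupport x.1 ∈ Set.range G := by
  let e (i : ι) : G i ≃ Fin (d + 1) := Finset.equivFinOfCardEq (hcard i)
  let g (z : ι × EuclideanSpace ℝ (Fin d)) : realization K :=
    ⟨cellPoint (e z.1) z.2, cellPoint_mem_realization (e z.1) (hfacet z.1).1 z.2⟩
  refine ⟨g, .of_continuous_injective_isOpenMap ?_ ?_ ?_, fun x => ⟨?_, ?_⟩⟩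
  · exact continuous_prod_of_discrete_left.2 fun i => (continuous_cellPoint (e i)).subtype_mk _
  · rintro ⟨i, y⟩ ⟨j, z⟩ h
    have hval : cellPoint (e i) y = cellPoint (e j) z := congrArg Subtype.val h
    obtain rfl : i = j := hG <| by
      rw [← weightSupport_cellPoint (e i) y, hval, weightSupport_cellPoint]
    rw [cellPoint_injective (e i) hval]
  · exact isOpenMap_prod_of_discrete_left.2 fun i => isOpenMap_cellPoint (e i) (hfacet i)
  · rintro ⟨z, rfl⟩
    exact ⟨z.1, (weightSupport_cellPoint (e z.1) z.2).symm⟩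
  · rintro ⟨i, hi⟩
    exact ⟨(i, cellCoord (e i) x.1), Subtype.ext <|
      cellPoint_cellCoord (e i) (mem_realization.1 x.2).1 hi.symm⟩

end Cell

section SqueezeExtend

variable {V : Type} [Fintype V] {K K' L : LowerSet (Finset V)} {τ : Finset V} {x : V → ℝ}
  {φ : (V → ℝ) → V → ℝ}

theorem homotopicWith_of_contiguous {f g : C(Polyhedron K, Polyhedron K)}
    (hfg : ∀ x, ∃ σ ∈ K, (f x).1 ∈ closedSimplex σ ∧ (g x).1 ∈ closedSimplex σ ∧
      (x ∈ subpolyhedron K K' → σ ∈ K')) :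
    ContinuousMap.HomotopicWith f g
      fun h => Set.MapsTo h (subpolyhedron K K') (subpolyhedron K K') := by
  choose σ hσ hf hg hσ' using hfg
  have hmem (t : unitInterval) (x) :
      AffineMap.lineMap (f x).1 (g x).1 (t : ℝ) ∈ closedSimplex (σ x) :=
    (convex_closedSimplex _).lineMap_mem (hf x) (hg x) t.2
  exact ⟨{
    toFun z := ⟨AffineMap.lineMap (f z.2).1 (g z.2).1 (z.1 : ℝ),
      closedSimplex_subset_realization K.lower (hσ z.2) (hmem z.1 z.2)⟩
    continuous_toFun := by fun_prop
    map_zero_left x := by simp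
    map_one_left x := by simp
    prop' t x hx := closedSimplex_subset_realization K'.lower (hσ' x hx) (hmem t x) }⟩

/-- The total weight of the vertices outside of `τ`. -/
noncomputable def outerMass (τ : Finset V) (x : V → ℝ) : ℝ := ∑ v ∈ τᶜ, x v

theorem continuous_outerMass (τ : Finset V) : Continuous (outerMass τ) := by
  unfold outerMass
  fun_prop

theorem outerMass_nonneg (τ : Finset V) (hx : x ∈ stdSimplex ℝ V) : 0 ≤ outerMass τ x :=
  Finset.sum_nonneg fun v _ => hx.1 v

theorem outerMass_eq_zero (hx : x ∈ closedSimplex τ) : outerMass τ x = 0 :=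
  Finset.sum_eq_zero fun v hv => (mem_closedSimplex.1 hx).2 v (Finset.mem_compl.1 hv)

/-- The factor by which `squeeze` scales the weights of the vertices outside of `τ`, in terms of
their total weight, before all weights are normalized. -/
noncomputable def squeezeFactor (u : ℝ) : ℝ := max 0 (2 * u - 1)

theorem squeezeFactor_nonneg (u : ℝ) : 0 ≤ squeezeFactor u := le_max_left _ _

theorem squeezeFactor_eq_zero {u : ℝ} (hu : u ≤ 1 / 2) : squeezeFactor u = 0 :=
  max_eq_left (by linarith)

theorem squeeze_denom_pos (u : ℝ) : 0 < 1 - u + squeezeFactor u * u := by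
  rcases le_or_gt u (1 / 2) with hu | hu
  · rw [squeezeFactor_eq_zero hu]
    linarith
  · rw [squeezeFactor, max_eq_right (by linarith)]
    nlinarith [sq_nonneg (2 * u - 1)]

/-- Radially push the half of the standard simplex closer to its face `τ` onto `τ`, stretching the
other half over the complement of `τ`. -/
noncomputable def squeeze (τ : Finset V) (x : V → ℝ) (v : V) : ℝ :=
  (if v ∈ τ then 1 else squeezeFactor (outerMass τ x)) * x v /
    (1 - outerMass τ x + squeezeFactor (outerMass τ x) * outerMass τ x)

theorem continuous_squeeze (τ : Finset V) : Continuous (squeeze τ) := by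
  have hmass := continuous_outerMass τ
  have hfactor : Continuous squeezeFactor := by
    unfold squeezeFactor
    fun_prop
  refine continuous_pi fun v => .div (.mul ?_ (by fun_prop)) (by fun_prop)
    fun x => (squeeze_denom_pos _).ne'
  split_ifs <;> fun_prop

theorem squeeze_eq_self (hx : x ∈ closedSimplex τ) : squeeze τ x = x := by
  ext v
  by_cases hv : v ∈ τ
  · simp [squeeze, hv, outerMass_eq_zero hx]
  · simp [squeeze, hv, (mem_closedSimplex.1 hx).2 v hv]

theorem sum_squeeze (τ : Finset V) (hx : ∑ v, x v = 1) : ∑ v, squeeze τ x v = 1 := by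
  have hinner : ∑ v ∈ τ, x v = 1 - outerMass τ x :=
    eq_sub_of_add_eq ((Finset.sum_add_sum_compl τ x).trans hx)
  simp only [squeeze, ← Finset.sum_div, ite_mul, one_mul, Finset.sum_ite,
    Finset.filter_univ_mem, ← Finset.mul_sum]
  rw [Finset.filter_notMem_eq_sdiff, ← Finset.compl_eq_univ_sdiff, hinner, ← outerMass,
    div_self (squeeze_denom_pos _).ne']

theorem squeeze_mem_stdSimplex (τ : Finset V) (hx : x ∈ stdSimplex ℝ V) :
    squeeze τ x ∈ stdSimplex ℝ V := by
  refine ⟨fun v => div_nonneg (mul_nonneg ?_ (hx.1 v)) (squeeze_denom_pos _).le,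
    sum_squeeze τ hx.2⟩
  split_ifs
  exacts [zero_le_one, squeezeFactor_nonneg _]

theorem squeeze_mem_closedSimplex_weightSupport (τ : Finset V) (hx : x ∈ stdSimplex ℝ V) :
    squeeze τ x ∈ closedSimplex (weightSupport x) := by
  refine mem_closedSimplex.2 ⟨squeeze_mem_stdSimplex τ hx, fun v hv => ?_⟩
  rw [mem_weightSupport, not_not] at hv
  rw [squeeze, hv, mul_zero, zero_div]

theorem squeeze_mem_closedSimplex (hx : x ∈ stdSimplex ℝ V) (hu : outerMass τ x ≤ 1 / 2) :
    squeeze τ x ∈ closedSimplex τ :=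
  mem_closedSimplex.2 ⟨squeeze_mem_stdSimplex τ hx, fun v hv => by
    rw [squeeze, if_neg hv, squeezeFactor_eq_zero hu, zero_mul, zero_div]⟩

/-- An extension of the self-map `φ` of the closed simplex `τ` to a self-map of the standard
simplex, which agrees with `squeeze τ` on the half farther away from `τ`. -/
noncomputable def squeezeExtend (τ : Finset V) (φ : (V → ℝ) → V → ℝ) (x : V → ℝ) : V → ℝ :=
  AffineMap.lineMap (squeeze τ x) (φ (squeeze τ x)) (max 0 (1 - 2 * outerMass τ x))

theorem continuous_squeezeExtend (hφ : Continuous φ) : Continuous (squeezeExtend τ φ) := by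
  have hmass := continuous_outerMass τ
  have hsqueeze := continuous_squeeze τ
  unfold squeezeExtend
  fun_prop

theorem squeezeExtend_eq (hx : x ∈ closedSimplex τ) : squeezeExtend τ φ x = φ x := by
  simp [squeezeExtend, squeeze_eq_self hx, outerMass_eq_zero hx]

theorem squeezeExtend_eq_squeeze_or_squeeze_mem_closedSimplex (hx : x ∈ stdSimplex ℝ V) :
    squeezeExtend τ φ x = squeeze τ x ∨ squeeze τ x ∈ closedSimplex τ := by
  rcases le_total (outerMass τ x) (1 / 2) with hu | hu
  · exact .inr (squeeze_mem_closedSimplex hx hu)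
  · left
    rw [squeezeExtend, max_eq_left (by linarith), AffineMap.lineMap_apply_zero]

theorem exists_squeeze_mem_squeezeExtend_mem
    (hφτ : Set.MapsTo φ (closedSimplex τ) (closedSimplex τ)) (hx : x ∈ stdSimplex ℝ V) :
    ∃ σ, (σ = weightSupport x ∨ σ = τ) ∧
      squeeze τ x ∈ closedSimplex σ ∧ squeezeExtend τ φ x ∈ closedSimplex σ := by
  rcases squeezeExtend_eq_squeeze_or_squeeze_mem_closedSimplex (φ := φ) hx with h | h
  · rw [h]
    exact ⟨_, .inl rfl, squeeze_mem_closedSimplex_weightSupport τ hx,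
      squeeze_mem_closedSimplex_weightSupport τ hx⟩
  · exact ⟨τ, .inr rfl, h, (convex_closedSimplex τ).lineMap_mem h (hφτ h)
      ⟨le_max_left _ _, max_le zero_le_one (by linarith [outerMass_nonneg τ hx])⟩⟩

theorem squeezeExtend_mem_realization
    (hφL : ∀ y ∈ closedSimplex τ, y ∈ realization L → φ y = y) (hx : x ∈ realization L) :
    squeezeExtend τ φ x ∈ realization L := by
  have hx' := (mem_realization.1 hx).1
  have hsqueeze : squeeze τ x ∈ realization L :=
    closedSimplex_subset_realization L.lower hx.2.2 (squeeze_mem_closedSimplex_weightSupport τ hx')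
  rcases squeezeExtend_eq_squeeze_or_squeeze_mem_closedSimplex (φ := φ) hx' with h | h
  · rwa [h]
  · rwa [squeezeExtend, hφL _ h hsqueeze, AffineMap.lineMap_same_apply]

/-- Both the identity and `squeezeExtend τ φ` are contiguous to `squeeze τ`. -/
theorem exists_isDeformation_eq_squeezeExtend (hτ : τ ∈ K) (hτ' : τ ∈ K') (hφ : Continuous φ)
    (hφτ : Set.MapsTo φ (closedSimplex τ) (closedSimplex τ)) :
    ∃ f : C(Polyhedron K, Polyhedron K),
      IsDeformation (subpolyhedron K K') f ∧ ∀ x, (f x : V → ℝ) = squeezeExtend τ φ x := by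
  have hx (x : Polyhedron K) : x.1 ∈ stdSimplex ℝ V := (mem_realization.1 x.2).1
  have hsqueeze (x : Polyhedron K) := squeeze_mem_closedSimplex_weightSupport τ (hx x)
  choose σ hσ hsqueezeσ hextendσ using fun x : Polyhedron K =>
    exists_squeeze_mem_squeezeExtend_mem hφτ (hx x)
  have hσmem {L : LowerSet (Finset V)} (hτL : τ ∈ L) (x : Polyhedron K)
      (hxL : weightSupport x.1 ∈ L) : σ x ∈ L := by
    rcases hσ x with h | h <;> rwa [h]
  let s : C(Polyhedron K, Polyhedron K) :=
    ⟨fun x => ⟨squeeze τ x, closedSimplex_subset_realization K.lower x.2.2.2 (hsqueeze x)⟩,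
      ((continuous_squeeze τ).comp continuous_subtype_val).subtype_mk _⟩
  let f : C(Polyhedron K, Polyhedron K) :=
    ⟨fun x => ⟨squeezeExtend τ φ x,
        closedSimplex_subset_realization K.lower (hσmem hτ x x.2.2.2) (hextendσ x)⟩,
      ((continuous_squeezeExtend hφ).comp continuous_subtype_val).subtype_mk _⟩
  have hs : IsDeformation (subpolyhedron K K') s := homotopicWith_of_contiguous fun x =>
    ⟨weightSupport x.1, x.2.2.2, mem_closedSimplex_weightSupport (hx x), hsqueeze x,
      mem_subpolyhedron.1⟩
  exact ⟨f, hs.trans <| homotopicWith_of_contiguous fun x => ⟨σ x, hσmem hτ x x.2.2.2,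
    hsqueezeσ x, hextendσ x, fun hxK' => hσmem hτ' x hxK'.2.2⟩, fun x => rfl⟩

end SqueezeExtend

section ShiftWeight

variable {V : Type} {R : Finset V} {hR : R.Nonempty} {w : V} {x : V → ℝ}

/-- Shift weight from all the vertices of `R` to the vertex `w`, at equal rates, until the weight
at some vertex of `R` vanishes. -/
noncomputable def shiftWeight (R : Finset V) (hR : R.Nonempty) (w : V) (x : V → ℝ) : V → ℝ :=
  fun v => x v + R.inf' hR x * ((if v = w then (R.card : ℝ) else 0) - if v ∈ R then 1 else 0)

theorem continuous_shiftWeight (R : Finset V) (hR : R.Nonempty) (w : V) :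
    Continuous (shiftWeight R hR w) := by
  unfold shiftWeight
  fun_prop

variable [Fintype V]

theorem shiftWeight_mem_closedSimplex {τ : Finset V} (hRτ : R ⊆ τ) (hw : w ∈ τ)
    (hx : x ∈ closedSimplex τ) : shiftWeight R hR w x ∈ closedSimplex τ := by
  rw [mem_closedSimplex] at hx ⊢
  obtain ⟨⟨hnonneg, hsum⟩, hzero⟩ := hx
  have hinf : 0 ≤ R.inf' hR x := Finset.le_inf' _ _ fun v _ => hnonneg v
  refine ⟨⟨fun v => ?_, ?_⟩, fun v hv => ?_⟩
  · have hgain : 0 ≤ R.inf' hR x * (if v = w then (R.card : ℝ) else 0) :=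
      mul_nonneg hinf (by split_ifs <;> positivity)
    have hloss : R.inf' hR x * (if v ∈ R then 1 else 0) ≤ x v := by
      split_ifs with hv
      · rw [mul_one]
        exact Finset.inf'_le x hv
      · rw [mul_zero]
        exact hnonneg v
    rw [shiftWeight, mul_sub]
    linarith
  · simp [shiftWeight, Finset.sum_add_distrib, ← Finset.mul_sum, Finset.sum_sub_distrib, hsum]
  · have hvw : v ≠ w := fun h => hv (h ▸ hw)
    have hvR : v ∉ R := fun h => hv (hRτ h)
    simp [shiftWeight, hvw, hvR, hzero v hv]

theorem not_subset_weightSupport_shiftWeight (hw : w ∉ R) :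
    ¬ R ⊆ weightSupport (shiftWeight R hR w x) := by
  obtain ⟨v, hv, hmin⟩ := Finset.exists_mem_eq_inf' hR x
  have hvw : v ≠ w := fun h => hw (h ▸ hv)
  exact fun hsub => mem_weightSupport.1 (hsub hv) (by simp [shiftWeight, hvw, hv, hmin])

theorem shiftWeight_eq_self (hx : ∀ v, 0 ≤ x v) (hRx : ¬ R ⊆ weightSupport x) :
    shiftWeight R hR w x = x := by
  obtain ⟨v, hv, hvx⟩ := Finset.not_subset.1 hRx
  rw [mem_weightSupport, not_not] at hvx
  have hinf : R.inf' hR x = 0 :=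
    le_antisymm (hvx ▸ Finset.inf'_le x hv) (Finset.le_inf' _ _ fun v _ => hx v)
  ext v
  simp [shiftWeight, hinf]

end ShiftWeight

section ContractsWithin

variable {V : Type} [Fintype V] {K K' L : LowerSet (Finset V)}

theorem contractsWithin_subpolyhedron_Iic {τ : Finset V} (hτ : τ ∈ K) (hτ' : τ ∈ K')
    (hne : τ.Nonempty) :
    ContractsWithin (subpolyhedron K K') (subpolyhedron K (.Iic τ)) := by
  obtain ⟨w, hw⟩ := hne
  have hmem : (Pi.single w 1 : V → ℝ) ∈ closedSimplex τ :=
    single_mem_realization (Finset.singleton_subset_iff.2 hw)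
  obtain ⟨f, hf, hfeq⟩ := exists_isDeformation_eq_squeezeExtend hτ hτ'
    (φ := fun _ => Pi.single w 1) continuous_const fun _ _ => hmem
  exact ⟨f, ⟨_, closedSimplex_subset_realization K.lower hτ hmem⟩, hf, fun x hx =>
    Subtype.ext ((hfeq x).trans (squeezeExtend_eq hx))⟩

/-- Contractibility of `L` passes to the union of `L` with the interval `[R, F]` of faces, which is
attached along the faces of `F` not containing `R`: these form a deformation retract of `F`, by
shifting weight from `R` to a vertex of `F` outside of `R`. -/
theorem ContractsWithin.sup_Iic {R F : Finset V} (hRF : R ⊂ F) (hR : R.Nonempty) (hF : F ∈ K)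
    (hF' : F ∈ K') (hLF : ∀ σ ⊆ F, (σ ∈ L ↔ ¬ R ⊆ σ))
    (hL : ContractsWithin (subpolyhedron K K') (subpolyhedron K L)) :
    ContractsWithin (subpolyhedron K K') (subpolyhedron K (L ⊔ .Iic F)) := by
  obtain ⟨w, hwF, hwR⟩ := Finset.exists_of_ssubset hRF
  have hshift : Set.MapsTo (shiftWeight R hR w) (closedSimplex F) (closedSimplex F) :=
    fun x => shiftWeight_mem_closedSimplex hRF.1 hwF
  obtain ⟨f, hf, hfeq⟩ :=
    exists_isDeformation_eq_squeezeExtend hF hF' (continuous_shiftWeight R hR w) hshift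
  refine hL.of_mapsTo hf fun x hx => ?_
  rw [mem_subpolyhedron] at hx
  change (f x).1 ∈ realization L
  rw [hfeq]
  rcases hx with hxL | hxF
  · exact squeezeExtend_mem_realization (fun y hyF hyL => shiftWeight_eq_self hyF.1
      ((hLF _ hyF.2.2).1 hyL.2.2)) ⟨x.2.1, x.2.2.1, hxL⟩
  · have hxF' : x.1 ∈ closedSimplex F := ⟨x.2.1, x.2.2.1, hxF⟩
    have hmem := hshift hxF'
    rw [squeezeExtend_eq hxF']
    exact ⟨hmem.1, hmem.2.1, (hLF _ hmem.2.2).2 (not_subset_weightSupport_shiftWeight hwR)⟩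

end ContractsWithin

section Shelling

variable {V : Type} {t : ℕ} {F : Fin t → Finset V} {i k : Fin t} {σ : Finset V}

/-- The simplicial complex generated by a family of faces. -/
def facetComplex (F : Fin t → Finset V) : LowerSet (Finset V) := lowerClosure (Set.range F)

theorem mem_facetComplex : σ ∈ facetComplex F ↔ ∃ k, σ ⊆ F k := by
  simp [facetComplex]

theorem apply_mem_facetComplex (F : Fin t → Finset V) (k : Fin t) : F k ∈ facetComplex F :=
  mem_facetComplex.2 ⟨k, subset_rfl⟩

variable [DecidableEq V]

/-- The restriction `R(F k)` of the `k`-th facet of a shelling: its unique minimal face which is not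
contained in a previous facet. -/
def shellingRestriction (F : Fin t → Finset V) (k : Fin t) : Finset V :=
  (F k).filter fun v => ∃ j < k, (F k).erase v ⊆ F j

/-- A homology facet of a shelling is attached along its entire boundary, hence contributes a
sphere to the homotopy type. -/
def IsHomologyFacet (F : Fin t → Finset V) (k : Fin t) : Prop := shellingRestriction F k = F k

theorem shellingRestriction_subset (F : Fin t → Finset V) (k : Fin t) :
    shellingRestriction F k ⊆ F k :=
  Finset.filter_subset _ _

theorem nonempty_of_card_isHomologyFacet_eq_succ {d : ℕ}
    (hdim : ∀ k, IsHomologyFacet F k → (F k).card = d + 1) (k : Fin t) : (F k).Nonempty := by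
  by_contra hk
  have hempty := Finset.not_nonempty_iff_eq_empty.1 hk
  have hhom : IsHomologyFacet F k :=
    (shellingRestriction_subset F k).antisymm (hempty ▸ Finset.empty_subset _)
  simpa [hempty] using hdim k hhom

theorem IsShellingOrder.exists_mem_shellingRestriction_notMem (hF : IsShellingOrder F)
    (hne : (F k).Nonempty) (hik : i < k) : ∃ v ∈ shellingRestriction F k, v ∉ F i := by
  obtain ⟨j, hj, hij, hcard⟩ := hF i k hik
  have hproper : F j ∩ F k ⊂ F k := Finset.ssubset_iff_subset_ne.2
    ⟨Finset.inter_subset_right, fun h => by have := hne.card_pos; rw [h] at hcard; omega⟩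
  obtain ⟨v, hv, hvj⟩ := Finset.exists_of_ssubset hproper
  have herase : F j ∩ F k = (F k).erase v :=
    Finset.eq_of_subset_of_card_le (Finset.subset_erase.2 ⟨Finset.inter_subset_right, hvj⟩)
      (by rw [Finset.card_erase_of_mem hv, hcard])
  exact ⟨v, Finset.mem_filter.2 ⟨hv, j, hj, herase ▸ Finset.inter_subset_left⟩,
    fun hvi => hvj (hij (Finset.mem_inter.2 ⟨hvi, hv⟩))⟩

theorem IsShellingOrder.shellingRestriction_subset_iff (hF : IsShellingOrder F)
    (hne : (F k).Nonempty) (hσ : σ ⊆ F k) :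
    shellingRestriction F k ⊆ σ ↔ ∀ i < k, ¬ σ ⊆ F i := by
  refine ⟨fun hR i hik hσi => ?_, fun h v hv => ?_⟩
  · obtain ⟨v, hv, hvi⟩ := hF.exists_mem_shellingRestriction_notMem hne hik
    exact hvi (hσi (hR hv))
  · obtain ⟨-, j, hj, hsub⟩ := Finset.mem_filter.1 hv
    by_contra hvσ
    exact h j hj ((Finset.subset_erase.2 ⟨hσ, hvσ⟩).trans hsub)

theorem IsShellingOrder.shellingRestriction_nonempty (hF : IsShellingOrder F)
    (hne : (F k).Nonempty) (hik : i < k) : (shellingRestriction F k).Nonempty := by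
  obtain ⟨v, hv, -⟩ := hF.exists_mem_shellingRestriction_notMem hne hik
  exact ⟨v, hv⟩

theorem not_isHomologyFacet_of_isMin (hk : IsMin k) (hne : (F k).Nonempty) :
    ¬ IsHomologyFacet F k := by
  intro h
  obtain ⟨v, hv⟩ := hne
  rw [← h] at hv
  obtain ⟨-, j, hj, -⟩ := Finset.mem_filter.1 hv
  exact hk.not_lt hj

theorem IsShellingOrder.injective (hF : IsShellingOrder F) (hne : ∀ k, (F k).Nonempty) :
    Function.Injective F :=
  Function.Injective.of_lt_imp_ne fun i k hik heq =>
    (hF.shellingRestriction_subset_iff (hne k) subset_rfl).1 (shellingRestriction_subset F k) i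
      hik heq.ge

theorem IsShellingOrder.existsUnique_mem_Icc (hF : IsShellingOrder F) (hne : ∀ k, (F k).Nonempty)
    (hσ : ∃ k, σ ⊆ F k) : ∃! k, σ ∈ Finset.Icc (shellingRestriction F k) (F k) := by
  have hmem (k) : σ ∈ Finset.Icc (shellingRestriction F k) (F k) ↔
      σ ⊆ F k ∧ ∀ i < k, ¬ σ ⊆ F i := by
    rw [Finset.mem_Icc, and_comm]
    exact and_congr_right fun hk => hF.shellingRestriction_subset_iff (hne k) hk
  obtain ⟨k, hk, hmin⟩ := wellFounded_lt.has_min {k | σ ⊆ F k} hσ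
  refine ⟨k, (hmem k).2 ⟨hk, fun i hik hi => hmin i hi hik⟩, fun j hj => ?_⟩
  obtain ⟨hj, hjmin⟩ := (hmem j).1 hj
  exact le_antisymm (not_lt.1 fun h => hjmin k h hk) (not_lt.1 (hmin j hj))

/-- The subcomplex obtained by removing all the homology facets of a shelling. -/
def nonHomologyPart (F : Fin t → Finset V) : LowerSet (Finset V) :=
  (facetComplex F).sdiff (F '' {k | IsHomologyFacet F k})

theorem mem_nonHomologyPart : σ ∈ nonHomologyPart F ↔
    σ ∈ facetComplex F ∧ ∀ k, IsHomologyFacet F k → ¬ F k ⊆ σ := by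
  rw [nonHomologyPart, ← SetLike.mem_coe, LowerSet.coe_sdiff]
  simp

end Shelling

section EulerCharacteristic

variable {V : Type} [DecidableEq V] {t d : ℕ} {F : Fin t → Finset V}

theorem sum_Icc_neg_one_pow_card {R S : Finset V} (h : R ⊆ S) :
    ∑ σ ∈ Finset.Icc R S, (-1 : ℤ) ^ (σ.card + 1) =
      if R = S then (-1) ^ (S.card + 1) else 0 := by
  split_ifs with hRS
  · simp [hRS]
  · have hne : (S \ R).Nonempty := Finset.sdiff_nonempty.2 fun h' => hRS (h.antisymm h')
    have hdisj (σ) (hσ : σ ∈ (S \ R).powerset) : Disjoint R σ :=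
      Finset.disjoint_of_subset_right (Finset.mem_powerset.1 hσ) Finset.disjoint_sdiff
    have hinj : Set.InjOn (R ∪ ·) ((S \ R).powerset : Set (Finset V)) := fun σ hσ τ hτ hστ => by
      rw [← Finset.union_sdiff_cancel_left (hdisj σ hσ),
        ← Finset.union_sdiff_cancel_left (hdisj τ hτ)]
      exact congrArg (· \ R) hστ
    calc ∑ σ ∈ Finset.Icc R S, (-1 : ℤ) ^ (σ.card + 1)
      _ = ∑ σ ∈ (S \ R).powerset, (-1 : ℤ) ^ ((R ∪ σ).card + 1) := by
        rw [Finset.Icc_eq_image_powerset h, Finset.sum_image hinj]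
      _ = ∑ σ ∈ (S \ R).powerset, (-1 : ℤ) ^ (R.card + 1) * (-1) ^ σ.card :=
        Finset.sum_congr rfl fun σ hσ => by
          rw [Finset.card_union_of_disjoint (hdisj σ hσ), ← pow_add, add_right_comm]
      _ = 0 := by
        rw [← Finset.mul_sum, Finset.sum_powerset_neg_one_pow_card_of_nonempty hne, mul_zero]

variable [Fintype V]

theorem IsShellingOrder.sum_facetComplex {M : Type*} [AddCommMonoid M] (hF : IsShellingOrder F)
    (hne : ∀ k, (F k).Nonempty) (f : Finset V → M) :
    ∑ σ ∈ Finset.univ.filter (· ∈ facetComplex F), f σ =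
      ∑ k, ∑ σ ∈ Finset.Icc (shellingRestriction F k) (F k), f σ := by
  have hunion : Finset.univ.filter (· ∈ facetComplex F) =
      Finset.univ.biUnion fun k => Finset.Icc (shellingRestriction F k) (F k) := by
    ext σ
    simp only [Finset.mem_filter, Finset.mem_univ, true_and, Finset.mem_biUnion, mem_facetComplex]
    exact ⟨fun hσ => (hF.existsUnique_mem_Icc hne hσ).exists,
      fun ⟨k, hk⟩ => ⟨k, (Finset.mem_Icc.1 hk).2⟩⟩
  rw [hunion]
  refine Finset.sum_biUnion fun i _ k _ hik => Finset.disjoint_left.2 fun σ hi hk => hik ?_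
  exact (hF.existsUnique_mem_Icc hne ⟨i, (Finset.mem_Icc.1 hi).2⟩).unique hi hk

theorem IsShellingOrder.natAbs_sum_eq_card_isHomologyFacet (hF : IsShellingOrder F)
    (hne : ∀ k, (F k).Nonempty) (hdim : ∀ k, IsHomologyFacet F k → (F k).card = d + 1) :
    (∑ σ ∈ Finset.univ.filter (· ∈ facetComplex F), (-1 : ℤ) ^ (σ.card + 1)).natAbs =
      Fintype.card {k // IsHomologyFacet F k} := by
  have hsum : ∑ σ ∈ Finset.univ.filter (· ∈ facetComplex F), (-1 : ℤ) ^ (σ.card + 1) =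
      Fintype.card {k // IsHomologyFacet F k} * (-1) ^ (d + 2) := calc
    _ = ∑ k, if IsHomologyFacet F k then (-1 : ℤ) ^ ((F k).card + 1) else 0 := by
      rw [hF.sum_facetComplex hne]
      exact Finset.sum_congr rfl fun k _ =>
        (sum_Icc_neg_one_pow_card (shellingRestriction_subset F k)).trans (by congr)
    _ = ∑ k with IsHomologyFacet F k, (-1 : ℤ) ^ (d + 2) := by
      rw [← Finset.sum_filter]
      exact Finset.sum_congr rfl fun k hk => by rw [hdim k (Finset.mem_filter.1 hk).2]
    _ = _ := by rw [Finset.sum_const, Fintype.card_subtype, nsmul_eq_mul]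
  rw [hsum, Int.natAbs_mul, Int.natAbs_pow, Int.natAbs_neg, Int.natAbs_one, one_pow, mul_one,
    Int.natAbs_natCast]

end EulerCharacteristic

section ContractibleSubcomplex

variable {V : Type} [DecidableEq V] {t : ℕ} {F : Fin t → Finset V} {i k : Fin t} {n : ℕ}
  {σ : Finset V}

theorem IsShellingOrder.eq_of_subset (hF : IsShellingOrder F) (hne : ∀ k, (F k).Nonempty)
    (hanti : IsAntichain (· ⊆ ·) (Set.range F)) (hik : F i ⊆ F k) :
    i = k :=
  hF.injective hne (hanti.eq ⟨i, rfl⟩ ⟨k, rfl⟩ hik)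

theorem IsShellingOrder.apply_mem_nonHomologyPart (hF : IsShellingOrder F)
    (hne : ∀ k, (F k).Nonempty) (hanti : IsAntichain (· ⊆ ·) (Set.range F))
    (hk : ¬ IsHomologyFacet F k) : F k ∈ nonHomologyPart F :=
  mem_nonHomologyPart.2 ⟨apply_mem_facetComplex F k, fun _ hi hik =>
    hk (hF.eq_of_subset hne hanti hik ▸ hi)⟩

theorem IsShellingOrder.mem_nonHomologyPart_iff (hF : IsShellingOrder F)
    (hne : ∀ k, (F k).Nonempty) (hanti : IsAntichain (· ⊆ ·) (Set.range F)) :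
    σ ∈ nonHomologyPart F ↔ σ ∈ facetComplex F ∧ ∀ k, IsHomologyFacet F k → F k ≠ σ := by
  refine mem_nonHomologyPart.trans (and_congr_right fun hσ =>
    ⟨fun h k hk hkσ => h k hk hkσ.subset, fun h k hk hkσ => h k hk (hkσ.antisymm ?_)⟩)
  obtain ⟨i, hi⟩ := mem_facetComplex.1 hσ
  rwa [hF.eq_of_subset hne hanti (hkσ.trans hi)]

/-- The part of `nonHomologyPart F` which lies in the first `n` facets of the shelling. -/
def shellingFiltration (F : Fin t → Finset V) (n : ℕ) : LowerSet (Finset V) :=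
  lowerClosure (F '' {k | k.val < n}) ⊓ nonHomologyPart F

theorem mem_shellingFiltration : σ ∈ shellingFiltration F n ↔
    (∃ k : Fin t, k.val < n ∧ σ ⊆ F k) ∧ σ ∈ nonHomologyPart F := by
  simp [shellingFiltration]

theorem shellingFiltration_succ_le (F : Fin t → Finset V) (k : Fin t) :
    shellingFiltration F (k + 1) ≤ shellingFiltration F k ⊔ .Iic (F k) := by
  intro σ hσ
  obtain ⟨⟨i, hi, hσi⟩, hσ⟩ := mem_shellingFiltration.1 hσ
  rcases Nat.lt_succ_iff_lt_or_eq.1 hi with hik | hik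
  · exact .inl (mem_shellingFiltration.2 ⟨⟨i, hik, hσi⟩, hσ⟩)
  · obtain rfl : i = k := Fin.ext hik
    exact .inr hσi

theorem nonHomologyPart_le_shellingFiltration (F : Fin t → Finset V) :
    nonHomologyPart F ≤ shellingFiltration F t := fun σ hσ => by
  obtain ⟨k, hk⟩ := mem_facetComplex.1 (mem_nonHomologyPart.1 hσ).1
  exact mem_shellingFiltration.2 ⟨⟨k, k.isLt, hk⟩, hσ⟩

theorem IsShellingOrder.mem_shellingFiltration_iff (hF : IsShellingOrder F)
    (hne : (F k).Nonempty) (hσ : σ ∈ nonHomologyPart F) (hσk : σ ⊆ F k) :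
    σ ∈ shellingFiltration F k ↔ ¬ shellingRestriction F k ⊆ σ := by
  rw [mem_shellingFiltration, and_iff_left hσ, hF.shellingRestriction_subset_iff hne hσk]
  push Not
  rfl

theorem IsShellingOrder.shellingFiltration_succ_le_of_isHomologyFacet (hF : IsShellingOrder F)
    (hne : (F k).Nonempty) (hk : IsHomologyFacet F k) :
    shellingFiltration F (k + 1) ≤ shellingFiltration F k := by
  intro σ hσ
  refine (shellingFiltration_succ_le F k hσ).elim id fun hσk => ?_
  have hσ' := (mem_shellingFiltration.1 hσ).2
  exact (hF.mem_shellingFiltration_iff hne hσ' hσk).2 fun hkσ =>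
    (mem_nonHomologyPart.1 hσ').2 k hk (hk ▸ hkσ)

variable [Fintype V]

theorem IsShellingOrder.contractsWithin_shellingFiltration_succ (hF : IsShellingOrder F)
    (hne : ∀ k, (F k).Nonempty) (hanti : IsAntichain (· ⊆ ·) (Set.range F)) (hik : i < k)
    (h : ContractsWithin (subpolyhedron (facetComplex F) (nonHomologyPart F))
      (subpolyhedron (facetComplex F) (shellingFiltration F k))) :
    ContractsWithin (subpolyhedron (facetComplex F) (nonHomologyPart F))
      (subpolyhedron (facetComplex F) (shellingFiltration F (k + 1))) := by
  by_cases hk : IsHomologyFacet F k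
  · exact h.mono <| subpolyhedron_mono _ <|
      hF.shellingFiltration_succ_le_of_isHomologyFacet (hne k) hk
  · have hk' := hF.apply_mem_nonHomologyPart hne hanti hk
    have hattach (σ : Finset V) (hσ : σ ⊆ F k) :
        σ ∈ shellingFiltration F k ↔ ¬ shellingRestriction F k ⊆ σ :=
      hF.mem_shellingFiltration_iff (hne k) ((nonHomologyPart F).lower hσ hk') hσ
    exact (h.sup_Iic (Finset.ssubset_iff_subset_ne.2 ⟨shellingRestriction_subset F k, hk⟩)
      (hF.shellingRestriction_nonempty (hne k) hik) (apply_mem_facetComplex F k) hk' hattach).mono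
      (subpolyhedron_mono _ (shellingFiltration_succ_le F k))

theorem IsShellingOrder.contractsWithin_shellingFiltration (hF : IsShellingOrder F)
    (hne : ∀ k, (F k).Nonempty) (hanti : IsAntichain (· ⊆ ·) (Set.range F)) (hn : n < t) :
    ContractsWithin (subpolyhedron (facetComplex F) (nonHomologyPart F))
      (subpolyhedron (facetComplex F) (shellingFiltration F (n + 1))) := by
  induction n with
  | zero =>
    let k : Fin t := ⟨0, hn⟩
    have hk : ¬ IsHomologyFacet F k :=
      not_isHomologyFacet_of_isMin (fun j _ => Nat.zero_le j) (hne k)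
    refine (contractsWithin_subpolyhedron_Iic (apply_mem_facetComplex F k)
      (hF.apply_mem_nonHomologyPart hne hanti hk) (hne k)).mono <| subpolyhedron_mono _ ?_
    intro σ hσ
    obtain ⟨⟨i, hi, hσi⟩, -⟩ := mem_shellingFiltration.1 hσ
    obtain rfl : i = k := Fin.ext (Nat.lt_one_iff.1 hi)
    exact hσi
  | succ n ih =>
    have hpos : (⟨0, Nat.zero_lt_of_lt hn⟩ : Fin t) < ⟨n + 1, hn⟩ := Fin.mk_lt_mk.2 n.succ_pos
    exact hF.contractsWithin_shellingFiltration_succ (k := ⟨n + 1, hn⟩) hne hanti hpos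
      (ih (Nat.lt_of_succ_lt hn))

theorem IsShellingOrder.contractsWithin_nonHomologyPart (hF : IsShellingOrder F)
    (hne : ∀ k, (F k).Nonempty) (hanti : IsAntichain (· ⊆ ·) (Set.range F)) (ht : t ≠ 0) :
    ContractsWithin (subpolyhedron (facetComplex F) (nonHomologyPart F))
      (subpolyhedron (facetComplex F) (nonHomologyPart F)) := by
  obtain ⟨n, rfl⟩ := Nat.exists_eq_succ_of_ne_zero ht
  exact (hF.contractsWithin_shellingFiltration hne hanti n.lt_succ_self).mono
    (subpolyhedron_mono _ (nonHomologyPart_le_shellingFiltration F))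

theorem IsShellingOrder.subpolyhedron_nonHomologyPart_nonempty (hF : IsShellingOrder F)
    (hne : ∀ k, (F k).Nonempty) (hanti : IsAntichain (· ⊆ ·) (Set.range F)) (ht : t ≠ 0) :
    (subpolyhedron (facetComplex F) (nonHomologyPart F)).Nonempty := by
  let k : Fin t := ⟨0, Nat.pos_of_ne_zero ht⟩
  have hk : F k ∈ nonHomologyPart F := hF.apply_mem_nonHomologyPart hne hanti <|
    not_isHomologyFacet_of_isMin (fun j _ => Nat.zero_le j) (hne k)
  obtain ⟨v, hv⟩ := hne k
  have hvk : {v} ⊆ F k := Finset.singleton_subset_iff.2 hv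
  exact ⟨⟨Pi.single v 1, single_mem_realization (mem_facetComplex.2 ⟨k, hvk⟩)⟩,
    single_mem_realization ((nonHomologyPart F).lower hvk hk)⟩

end ContractibleSubcomplex

section Main

variable {V : Type} {K : Set (Finset V)} {t d : ℕ} {F : Fin t → Finset V}

theorem exists_isFacet_superset [Finite V] {σ : Finset V} (hσ : σ ∈ K) :
    ∃ τ, IsFacet K τ ∧ σ ⊆ τ := by
  obtain ⟨τ, hτ, hmax⟩ := K.toFinite.exists_le_maximal hσ
  exact ⟨τ, ⟨hmax.prop, fun ρ hρ h => h.antisymm (hmax.2 hρ h)⟩, hτ⟩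

theorem coe_facetComplex [Finite V] (hK : IsLowerSet K) (hF : ∀ σ, IsFacet K σ ↔ ∃ k, F k = σ) :
    (facetComplex F : Set (Finset V)) = K := by
  ext σ
  refine mem_facetComplex.trans
    ⟨fun ⟨k, hk⟩ => hK hk ((hF _).2 ⟨k, rfl⟩).1, fun hσ => ?_⟩
  obtain ⟨τ, hτ, hστ⟩ := exists_isFacet_superset hσ
  obtain ⟨k, rfl⟩ := (hF τ).1 hτ
  exact ⟨k, hστ⟩

theorem isAntichain_setOf_isFacet : IsAntichain (· ⊆ ·) {σ | IsFacet K σ} :=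
  fun _ hσ _ hτ hne h => hne (hσ.2 _ hτ.1 h)

theorem isFacet_facetComplex (hF : IsAntichain (· ⊆ ·) (Set.range F)) (k : Fin t) :
    IsFacet (facetComplex F) (F k) := by
  refine ⟨apply_mem_facetComplex F k, fun τ hτ hkτ => ?_⟩
  obtain ⟨i, hi⟩ := mem_facetComplex.1 hτ
  exact hkτ.antisymm (hF.eq ⟨k, rfl⟩ ⟨i, rfl⟩ (hkτ.trans hi) ▸ hi)

variable [Fintype V] [DecidableEq V]

theorem IsShellingOrder.exists_isOpenEmbedding_homologyFacets (hF : IsShellingOrder F)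
    (hne : ∀ k, (F k).Nonempty) (hanti : IsAntichain (· ⊆ ·) (Set.range F))
    (hdim : ∀ k, IsHomologyFacet F k → (F k).card = d + 1) :
    ∃ g : Fin (Fintype.card {k // IsHomologyFacet F k}) × EuclideanSpace ℝ (Fin d) →
        Polyhedron (facetComplex F),
      IsOpenEmbedding g ∧
        ∀ x, x ∉ Set.range g ↔ x ∈ subpolyhedron (facetComplex F) (nonHomologyPart F) := by
  let e := (Fintype.equivFin {k // IsHomologyFacet F k}).symm
  have hinj : Function.Injective fun i => F (e i) :=
    (hF.injective hne).comp (Subtype.val_injective.comp e.injective)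
  obtain ⟨g, hg, hrange⟩ := exists_isOpenEmbedding_cells hinj
    (fun i => isFacet_facetComplex hanti (e i)) fun i => hdim _ (e i).2
  refine ⟨g, hg, fun x => ?_⟩
  have hx : weightSupport x.1 ∈ facetComplex F := x.2.2.2
  rw [hrange, mem_subpolyhedron, hF.mem_nonHomologyPart_iff hne hanti, and_iff_right hx]
  simp [e.forall_congr_left]

theorem IsShellingOrder.nonempty_homotopyEquiv_onePoint (hF : IsShellingOrder F)
    (hne : ∀ k, (F k).Nonempty) (hanti : IsAntichain (· ⊆ ·) (Set.range F)) (ht : t ≠ 0)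
    (hdim : ∀ k, IsHomologyFacet F k → (F k).card = d + 1) :
    Nonempty (ContinuousMap.HomotopyEquiv (Polyhedron (facetComplex F))
      (OnePoint (Fin (Fintype.card {k // IsHomologyFacet F k}) × EuclideanSpace ℝ (Fin d)))) := by
  obtain ⟨g, hg, hrange⟩ := hF.exists_isOpenEmbedding_homologyFacets hne hanti hdim
  obtain ⟨x, hx⟩ := hF.subpolyhedron_nonHomologyPart_nonempty hne hanti ht
  have : CompactSpace (Polyhedron (facetComplex F)) :=
    isCompact_iff_compactSpace.1 (isCompact_realization (facetComplex F).lower)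
  refine (hF.contractsWithin_nonHomologyPart hne hanti ht).nonempty_homotopyEquiv
    (q := ⟨collapse g, continuous_collapse hg⟩)
    (isQuotientMap_collapse hg ((hrange x).2 hx)) fun x y => ?_
  rw [← hrange, ← hrange]
  exact collapse_eq_collapse_iff hg.injective

end Main

theorem shellable_homotopyEquiv_wedge_general {V : Type} [Fintype V] [DecidableEq V]
    {K : Set (Finset V)} {t d : ℕ} (hK : IsLowerSet K) (hKne : K.Nonempty) {F : Fin t → Finset V}
    (hFfacets : ∀ σ, IsFacet K σ ↔ ∃ m, F m = σ) (hshell : IsShellingOrder F)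
    (hdim : ∀ k, IsHomologyFacet F k → (F k).card = d + 1) :
    Nonempty (ContinuousMap.HomotopyEquiv ↥(realization K)
      (WedgeOfSpheres
        (∑ σ ∈ Finset.univ.filter (fun σ : Finset V => σ ∈ K),
          (-1 : ℤ) ^ (σ.card + 1)).natAbs d)) := by
  obtain rfl := coe_facetComplex hK hFfacets
  obtain ⟨σ, hσ⟩ := hKne
  obtain ⟨k₀, -⟩ := mem_facetComplex.1 hσ
  have hne (k) : (F k).Nonempty := nonempty_of_card_isHomologyFacet_eq_succ hdim k
  have hanti : IsAntichain (· ⊆ ·) (Set.range F) :=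
    isAntichain_setOf_isFacet.subset (Set.range_subset_iff.2 fun k => (hFfacets _).2 ⟨k, rfl⟩)
  obtain ⟨φ⟩ := hshell.nonempty_homotopyEquiv_onePoint hne hanti k₀.pos.ne' hdim
  obtain ⟨ψ⟩ := nonempty_wedgeOfSpheres_homeomorph (Fintype.card {k // IsHomologyFacet F k}) d
  have hχ : (∑ σ ∈ Finset.univ.filter (· ∈ (facetComplex F : Set (Finset V))),
      (-1 : ℤ) ^ (σ.card + 1)).natAbs = Fintype.card {k // IsHomologyFacet F k} :=
    hshell.natAbs_sum_eq_card_isHomologyFacet hne hdim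
  rw [hχ]
  exact ⟨φ.trans ψ.symm.toHomotopyEquiv⟩

/-- A shellable pure `d`-dimensional simplicial complex which is not a simplex
has geometric realization homotopy equivalent to a wedge of `r` copies of the
`d`-sphere, where `r` is the absolute value of the reduced Euler characteristic
`χ̃ = ∑_{σ ∈ K, including ∅} (-1)^{dim σ}`. -/
theorem shellable_homotopyEquiv_wedge {V : Type} [Fintype V] [DecidableEq V]
    (K : Set (Finset V)) (d : ℕ)
    (hdown : ∀ σ ∈ K, ∀ τ ⊆ σ, τ ∈ K)
    (hempty : ∅ ∈ K)
    (hpure : ∀ σ, IsFacet K σ → σ.card = d + 1)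
    (t : ℕ) (F : Fin t → Finset V) (hFinj : Function.Injective F)
    (hFfacets : ∀ σ, IsFacet K σ ↔ ∃ m, F m = σ)
    (hshell : IsShellingOrder F)
    (hnotsimplex : ¬ ∃ A : Finset V, K = {σ | σ ⊆ A}) :
    Nonempty (ContinuousMap.HomotopyEquiv ↥(realization K)
      (WedgeOfSpheres
        (∑ σ ∈ Finset.univ.filter (fun σ : Finset V => σ ∈ K),
          (-1 : ℤ) ^ (σ.card + 1)).natAbs d)) :=
  shellable_homotopyEquiv_wedge_general (fun σ τ h hσ => hdown σ hσ τ h) ⟨∅, hempty⟩ hFfacets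
    hshell fun k _ => hpure _ ((hFfacets _).2 ⟨k, rfl⟩)
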